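/- arXiv:1509.08263 — 3 statements merged into one kernel-verified Lean document; each statement's English description precedes it below -/
import Mathlib

section
/- Let x be an n×n complex hermitian positive semidefinite matrix of rank 1 and let π be an n×n complex hermitian matrix lying in the image of L_x, i.e. π = x∘w for some hermitian matrix w. Then tr(x·π·π) = ((tr x)/2)·(tr(π·π) + (tr π)²). -/
open Matrix
open scoped ComplexOrder

/-- The Jordan product of two matrices. -/
noncomputable def jordanProd {n : ℕ} (a b : Matrix (Fin n) (Fin n) ℂ) :
    Matrix (Fin n) (Fin n) ℂ :=
  (1 / 2 : ℂ) • (a * b + b * a)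

theorem rank_one_factor {n : ℕ} (x : Matrix (Fin n) (Fin n) ℂ) (hrank : x.rank = 1) :
    ∃ u v : Fin n → ℂ, x = vecMulVec u v := by
  unfold Matrix.rank at hrank
  obtain ⟨u, hu, h⟩ := finrank_eq_one_iff'.mp hrank
  have h2 : ∀ j, ∃ c : ℂ, c • (u : Fin n → ℂ) = x.col j := by
    intro j
    obtain ⟨c, hc⟩ := h ⟨x.mulVecLin (Pi.single j 1), LinearMap.mem_range_self _ _⟩
    refine ⟨c, ?_⟩
    have := congrArg Subtype.val hc
    simpa using this
  choose v hv using h2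
  refine ⟨u, v, ?_⟩
  ext i j
  have := congrFun (hv j) i
  simp [vecMulVec_apply] at this ⊢
  rw [← this, mul_comm]

theorem rank_one_sandwich {n : ℕ} (x m : Matrix (Fin n) (Fin n) ℂ) (hrank : x.rank = 1) :
    x * (m * x) = (x * m).trace • x := by
  obtain ⟨u, v, rfl⟩ := rank_one_factor x hrank
  rw [mul_vecMulVec, vecMulVec_mul_vecMulVec, Matrix.trace_mul_comm, mul_vecMulVec,
    trace_vecMulVec, dotProduct_comm]
  ext i j
  simp [vecMulVec_apply]
  try ring

theorem rank_one_psd_trace_x_pi_sq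
    (n : ℕ) (hn : 2 ≤ n) (x p : Matrix (Fin n) (Fin n) ℂ)
    (hherm : x.IsHermitian) (hpsd : x.PosSemidef) (hrank : x.rank = 1)
    (hp : ∃ w : Matrix (Fin n) (Fin n) ℂ, w.IsHermitian ∧ p = jordanProd x w) :
    (x * p * p).trace = (x.trace / 2) * ((p * p).trace + p.trace ^ 2) := by
  obtain ⟨w, -, rfl⟩ := hp
  have h1 : x * x = x.trace • x := by simpa using rank_one_sandwich x 1 hrank
  have h1' : ∀ m, x * (x * m) = x.trace • (x * m) := by
    intro m; rw [← mul_assoc, h1, smul_mul_assoc]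
  have h2 := rank_one_sandwich x w hrank
  have h2' : ∀ m, x * (w * (x * m)) = (x * w).trace • (x * m) := by
    intro m; rw [← smul_mul_assoc, ← h2]; simp only [mul_assoc]
  have c1 : (w * x).trace = (x * w).trace := Matrix.trace_mul_comm _ _
  have c2 : (w * (x * w)).trace = (x * (w * w)).trace := by
    rw [Matrix.trace_mul_comm, mul_assoc]
  have c3 : (x * (w * (w * x))).trace = x.trace * (x * (w * w)).trace := by
    have : x * (w * (w * x)) = (x * (w * w)) * x := by simp only [mul_assoc]
    rw [this, Matrix.trace_mul_comm, h1', trace_smul, smul_eq_mul]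
  simp only [jordanProd, smul_mul_assoc, mul_smul_comm, mul_add, add_mul, mul_assoc, h1, h1', h2,
    h2', trace_smul, trace_add, smul_add, c1, c2, c3, smul_eq_mul]
  ring
end

section
/- Theorem 6.1(vi): with the notation of the context, Σ_α 𝒳_{e_α}·𝒴_{e_α} = n·(𝓛_e² + μ²). -/
open Matrix
open scoped ComplexOrder

/-- The Jordan triple product `{uvw} = u∘(v∘w) − v∘(u∘w) + (u∘v)∘w`. -/
noncomputable def jTriple {n : ℕ} (u v w : Matrix (Fin n) (Fin n) ℂ) :
    Matrix (Fin n) (Fin n) ℂ :=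
  jordanProd u (jordanProd v w) - jordanProd v (jordanProd u w)
    + jordanProd (jordanProd u v) w

/-- The real inner product `⟨u|v⟩ = (1/n)·Re(tr(u·v))`. -/
noncomputable def jInner {n : ℕ} (u v : Matrix (Fin n) (Fin n) ℂ) : ℝ :=
  (1 / n : ℝ) * ((u * v).trace).re

/-- `𝒴_u = ⟨u|x⟩`. -/
noncomputable def Yfun {n : ℕ} (x u : Matrix (Fin n) (Fin n) ℂ) : ℝ :=
  jInner u x

/-- `𝓛_u = ⟨u∘x|π⟩`. -/
noncomputable def Lfun {n : ℕ} (x p u : Matrix (Fin n) (Fin n) ℂ) : ℝ :=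
  jInner (jordanProd u x) p

/-- `𝓛_{u,v} = ⟨u∘(v∘x) − v∘(u∘x)|π⟩ − μ·i·tr(x·[u,v])/(2·tr x)`. -/
noncomputable def LLfun {n : ℕ} (μ : ℝ) (x p u v : Matrix (Fin n) (Fin n) ℂ) : ℝ :=
  jInner (jordanProd u (jordanProd v x) - jordanProd v (jordanProd u x)) p
    - μ * (Complex.I * (x * (u * v - v * u)).trace).re / (2 * (x.trace).re)

/-- `𝒳_u = ⟨x|{πuπ}⟩ + n·μ²·Re(tr(x·u))/(tr x)² − μ·i·tr(x·[u,π])/(tr x)`. -/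
noncomputable def Xfun {n : ℕ} (μ : ℝ) (x p u : Matrix (Fin n) (Fin n) ℂ) : ℝ :=
  jInner x (jTriple p u p) + (n : ℝ) * μ ^ 2 * ((x * u).trace).re / ((x.trace).re) ^ 2
    - μ * (Complex.I * (x * (u * p - p * u)).trace).re / (x.trace).re


lemma aux_jTriple {n : ℕ} (p u : Matrix (Fin n) (Fin n) ℂ) : jTriple p u p = p * u * p := by
  unfold jTriple jordanProd
  simp only [mul_add, add_mul, smul_add, Matrix.mul_smul, Matrix.smul_mul, smul_smul, ← mul_assoc]
  module

lemma aux_rank_one {n : ℕ} (x : Matrix (Fin n) (Fin n) ℂ) (h : x.rank = 1) :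
    ∃ a b : Fin n → ℂ, x = vecMulVec a b := by
  unfold Matrix.rank at h
  obtain ⟨v, -, hv⟩ := finrank_eq_one_iff'.1 h
  choose c hc using fun j => hv ⟨x.mulVecLin (Pi.single j 1), LinearMap.mem_range_self _ _⟩
  refine ⟨v.1, c, ?_⟩
  ext i j
  have := congrFun (congrArg Subtype.val (hc j)) i
  simp [vecMulVec_apply] at this ⊢
  rw [← this, mul_comm]

lemma aux_sandwich {n : ℕ} (x m : Matrix (Fin n) (Fin n) ℂ) (h : x.rank = 1) :
    x * m * x = (x * m).trace • x := by
  obtain ⟨a, b, rfl⟩ := aux_rank_one x h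
  rw [vecMulVec_mul, vecMulVec_mul_vecMulVec, trace_vecMulVec, dotProduct_comm a, 
    vecMulVec_smul]

lemma aux_X_sum {n : ℕ} (μ : ℝ) (x p : Matrix (Fin n) (Fin n) ℂ) {ι : Type*} (s : Finset ι)
    (E : ι → Matrix (Fin n) (Fin n) ℂ) (c : ι → ℝ) :
    Xfun μ x p (∑ i ∈ s, (c i : ℂ) • E i) = ∑ i ∈ s, Xfun μ x p (E i) * c i := by
  classical
  induction s using Finset.induction_on with
  | empty => simp [Xfun, aux_jTriple, jInner]
  | insert a s ha ih =>
    rw [Finset.sum_insert ha, Finset.sum_insert ha, ← ih]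
    generalize ∑ i ∈ s, (c i : ℂ) • E i = S
    simp only [Xfun, aux_jTriple, jInner, mul_add, add_mul, mul_sub, Matrix.mul_smul,
      Matrix.smul_mul, trace_add, trace_sub, trace_smul, smul_eq_mul, Complex.add_re,
      Complex.sub_re, Complex.mul_re, Complex.ofReal_re, Complex.ofReal_im, Complex.I_re,
      Complex.I_im, Complex.add_im, Complex.sub_im, Complex.mul_im]
    ring

theorem quadratic_relation_vi
    (n : ℕ) (hn : 2 ≤ n) (μ : ℝ)
    (x : Matrix (Fin n) (Fin n) ℂ)
    (hherm : x.IsHermitian) (hpsd : x.PosSemidef) (hrank : x.rank = 1)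
    (p w : Matrix (Fin n) (Fin n) ℂ) (hw : w.IsHermitian) (hp : p = jordanProd x w)
    (E : Fin (n ^ 2) → Matrix (Fin n) (Fin n) ℂ)
    (hEherm : ∀ α, (E α).IsHermitian)
    (hEorth : ∀ α β, jInner (E α) (E β) = if α = β then 1 else 0)
    (hEspan : ∀ u : Matrix (Fin n) (Fin n) ℂ, u.IsHermitian →
      u = ∑ α, (jInner (E α) u : ℂ) • E α)
    :
    (∑ α, Xfun μ x p (E α) * Yfun x (E α)) = (n : ℝ) * ((Lfun x p 1) ^ 2 + μ ^ 2) := by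
  have hn0 : (n : ℝ) ≠ 0 := by
    have : n ≠ 0 := by omega
    exact_mod_cast this
  have hpH : p.IsHermitian := by
    rw [hp]
    unfold jordanProd
    simp only [Matrix.IsHermitian, conjTranspose_smul, conjTranspose_add, conjTranspose_mul,
      hw.eq, hherm.eq]
    rw [add_comm]
    simp
  have hx0 : x ≠ 0 := by
    rintro rfl
    simp at hrank
  have ht0 : x.trace ≠ 0 := fun h => hx0 (hpsd.trace_eq_zero_iff.1 h)
  have htim : x.trace.im = 0 := by
    have := congrArg trace hherm.eq
    rw [trace_conjTranspose] at this
    exact Complex.conj_eq_iff_im.1 this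
  have htre : x.trace.re ≠ 0 := fun h => ht0 (Complex.ext h htim)
  have hpim : (x * p).trace.im = 0 := by
    have : (x * p)ᴴ.trace = (x * p).trace := by
      rw [conjTranspose_mul, hherm.eq, hpH.eq, trace_mul_comm]
    rw [trace_conjTranspose] at this
    exact Complex.conj_eq_iff_im.1 this
  have h1 : (∑ α, Xfun μ x p (E α) * Yfun x (E α)) = Xfun μ x p x := by
    have h := aux_X_sum μ x p Finset.univ E (fun α => jInner (E α) x)
    rw [← hEspan x hherm] at h
    exact h.symm
  rw [h1]
  have hxx : (x * x).trace = x.trace * x.trace := by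
    have := congrArg trace (aux_sandwich x 1 hrank)
    simpa using this
  have hxpxp : (x * (p * x * p)).trace = (x * p).trace * (x * p).trace := by
    have := aux_sandwich x p hrank
    rw [← mul_assoc, ← mul_assoc, this, smul_mul, trace_smul, smul_eq_mul]
  have hc : (x * (x * p - p * x)).trace = 0 := by
    rw [mul_sub, trace_sub, ← mul_assoc x p x, trace_mul_comm (x * p) x, sub_self]
  have hL : Lfun x p 1 = (1 / n : ℝ) * (x * p).trace.re := by
    have : jordanProd 1 x = x := by
      unfold jordanProd
      rw [one_mul, mul_one]
      module
    rw [Lfun, this, jInner]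
  rw [hL]
  unfold Xfun
  rw [aux_jTriple, jInner, hxpxp, hxx, hc]
  simp only [Complex.mul_re, htim, hpim, mul_zero, sub_zero, Complex.zero_re, Complex.zero_im, zero_div]
  field_simp
end

section
/- Theorem 6.1(vii): with the notation of the context, (4/n³)·Σ_{α,β} 𝓛_{e_α,e_β}² = 𝒳_e·𝒴_e − 𝓛_e² + ((n−2)/n)·μ². -/
open Matrix
open scoped ComplexOrder

theorem aux_real {n : ℕ} {A B : Matrix (Fin n) (Fin n) ℂ} (hA : A.IsHermitian)
    (hB : B.IsHermitian) : (((A * B).trace.re : ℝ) : ℂ) = (A * B).trace := by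
  apply Complex.conj_eq_iff_re.mp
  have h : star (A * B).trace = (A * B)ᴴ.trace := (Matrix.trace_conjTranspose _).symm
  rw [starRingEnd_apply, h, Matrix.conjTranspose_mul, hA.eq, hB.eq, Matrix.trace_mul_comm]

theorem aux_jp {n : ℕ} {A B : Matrix (Fin n) (Fin n) ℂ} (hA : A.IsHermitian)
    (hB : B.IsHermitian) : (jordanProd A B).IsHermitian := by
  unfold Matrix.IsHermitian jordanProd
  rw [Matrix.conjTranspose_smul, Matrix.conjTranspose_add, Matrix.conjTranspose_mul,
    Matrix.conjTranspose_mul, hA.eq, hB.eq, add_comm]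
  simp

theorem aux_comm {n : ℕ} {A B : Matrix (Fin n) (Fin n) ℂ} (hA : A.IsHermitian)
    (hB : B.IsHermitian) : (Complex.I • (A * B - B * A)).IsHermitian := by
  unfold Matrix.IsHermitian
  rw [Matrix.conjTranspose_smul, Matrix.conjTranspose_sub, Matrix.conjTranspose_mul,
    Matrix.conjTranspose_mul, hA.eq, hB.eq]
  simp [smul_sub]
  abel

theorem aux_span {n : ℕ} (E : Fin (n ^ 2) → Matrix (Fin n) (Fin n) ℂ)
    (hEherm : ∀ α, (E α).IsHermitian)
    (hEspan : ∀ u : Matrix (Fin n) (Fin n) ℂ, u.IsHermitian →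
      u = ∑ α, (jInner (E α) u : ℂ) • E α) (M : Matrix (Fin n) (Fin n) ℂ) :
    M = ∑ α, ((1 / n : ℂ) * (E α * M).trace) • E α := by
  have key : ∀ u : Matrix (Fin n) (Fin n) ℂ, u.IsHermitian →
      ∑ α, ((1 / n : ℂ) * (E α * u).trace) • E α = u := by
    intro u hu
    conv_rhs => rw [hEspan u hu]
    refine Finset.sum_congr rfl fun α _ => ?_
    unfold jInner
    push_cast
    rw [aux_real (hEherm α) hu]
  have h1 : (M + Mᴴ).IsHermitian := by
    unfold Matrix.IsHermitian; simp [add_comm]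
  have h2 : (Complex.I • (M - Mᴴ)).IsHermitian := by
    unfold Matrix.IsHermitian; simp [smul_sub]; abel
  have hM : M = (1 / 2 : ℂ) • (M + Mᴴ) + (-Complex.I / 2) • (Complex.I • (M - Mᴴ)) := by
    rw [smul_smul]
    have : -Complex.I / 2 * Complex.I = 1 / 2 := by
      linear_combination (-1 / 2 : ℂ) * Complex.I_mul_I
    rw [this]
    ext i j
    simp
    ring
  have e1 := key _ h1
  have e2 := key _ h2
  generalize M + Mᴴ = P at *
  generalize Complex.I • (M - Mᴴ) = Q at *
  subst hM
  conv_lhs => rw [← e1, ← e2]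
  rw [Finset.smul_sum, Finset.smul_sum, ← Finset.sum_add_distrib]
  refine Finset.sum_congr rfl fun α _ => ?_
  rw [smul_smul, smul_smul, ← add_smul]
  congr 1
  simp only [mul_add, Matrix.mul_smul, Matrix.trace_add, Matrix.trace_smul, smul_eq_mul]
  ring

theorem aux_sq {n : ℕ} (hn : (n : ℂ) ≠ 0) (E : Fin (n ^ 2) → Matrix (Fin n) (Fin n) ℂ)
    (hs : ∀ M, M = ∑ α, ((1 / n : ℂ) * (E α * M).trace) • E α)
    (C : Matrix (Fin n) (Fin n) ℂ) :
    ∑ α, (E α * C).trace ^ 2 = n * (C * C).trace := by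
  have h : (C * C).trace = ∑ α, ((1 / n : ℂ) * (E α * C).trace) * (E α * C).trace := by
    conv_lhs => rw [congrArg (fun X => X * C) (hs C)]
    rw [Finset.sum_mul, Matrix.trace_sum]
    simp
  rw [h, Finset.mul_sum]
  refine Finset.sum_congr rfl fun α _ => ?_
  field_simp

theorem aux_entry {n : ℕ} (hn : (n : ℂ) ≠ 0) (E : Fin (n ^ 2) → Matrix (Fin n) (Fin n) ℂ)
    (hs : ∀ M, M = ∑ α, ((1 / n : ℂ) * (E α * M).trace) • E α) (i j k l : Fin n) :
    ∑ α, E α i j * E α k l = if j = k ∧ i = l then (n : ℂ) else 0 := by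
  have h := congrFun (congrFun (hs (Matrix.single j i 1)) k) l
  simp only [Matrix.sum_apply, Matrix.smul_apply, Matrix.trace_mul_single, smul_eq_mul,
    Matrix.single_apply, mul_one, MulOpposite.op_one, one_smul] at h
  have h2 : ∑ α, E α i j * E α k l = n * ∑ α, 1 / (n : ℂ) * E α i j * E α k l := by
    rw [Finset.mul_sum]
    refine Finset.sum_congr rfl fun α _ => ?_
    field_simp
  rw [h2, ← h]
  simp

theorem aux_EAE {n : ℕ} (hn : (n : ℂ) ≠ 0) (E : Fin (n ^ 2) → Matrix (Fin n) (Fin n) ℂ)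
    (hs : ∀ M, M = ∑ α, ((1 / n : ℂ) * (E α * M).trace) • E α)
    (A : Matrix (Fin n) (Fin n) ℂ) :
    ∑ α, E α * A * E α = (n * A.trace) • (1 : Matrix (Fin n) (Fin n) ℂ) := by
  ext i l
  simp only [Matrix.sum_apply, Matrix.mul_apply, Finset.sum_mul]
  rw [Finset.sum_comm]
  have : ∀ k, ∑ α, ∑ j, E α i j * A j k * E α k l
      = ∑ j, A j k * (if j = k ∧ i = l then (n : ℂ) else 0) := by
    intro k
    rw [Finset.sum_comm]
    refine Finset.sum_congr rfl fun j _ => ?_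
    rw [← aux_entry hn E hs, Finset.mul_sum]
    refine Finset.sum_congr rfl fun α _ => ?_
    ring
  simp only [this]
  by_cases h : i = l
  · simp [h, Matrix.trace, Finset.mul_sum, mul_comm]
  · simp [h]

theorem aux_sum {n : ℕ} (hn : (n : ℂ) ≠ 0) (E : Fin (n ^ 2) → Matrix (Fin n) (Fin n) ℂ)
    (hs : ∀ M, M = ∑ α, ((1 / n : ℂ) * (E α * M).trace) • E α)
    (K : Matrix (Fin n) (Fin n) ℂ) :
    ∑ α, ∑ β, ((E α * E β - E β * E α) * K).trace ^ 2
      = 2 * n ^ 2 * (K.trace ^ 2 - n * (K * K).trace) := by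
  rw [Finset.sum_comm]
  have h1 : ∀ β, ∑ α, ((E α * E β - E β * E α) * K).trace ^ 2
      = 2 * n * ((E β * K * E β * K).trace - (E β * 1 * E β * (K * K)).trace) := by
    intro β
    have := aux_sq hn E hs (E β * K - K * E β)
    have e : ∀ α, ((E α * E β - E β * E α) * K).trace
        = (E α * (E β * K - K * E β)).trace := by
      intro α
      rw [sub_mul, mul_sub, Matrix.trace_sub, Matrix.trace_sub, Matrix.mul_assoc,
        Matrix.mul_assoc, Matrix.trace_mul_comm (E β), Matrix.mul_assoc]
    simp only [e, this]
    simp only [sub_mul, mul_sub, Matrix.trace_sub, mul_one]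
    have a1 : (E β * K * (E β * K)).trace = (E β * K * E β * K).trace := by
      simp only [Matrix.mul_assoc]
    have a2 : (K * E β * (K * E β)).trace = (E β * K * E β * K).trace := by
      rw [Matrix.mul_assoc, Matrix.trace_mul_comm]; simp only [Matrix.mul_assoc]
    have a3 : (K * E β * (E β * K)).trace = (E β * E β * (K * K)).trace := by
      rw [Matrix.mul_assoc, Matrix.trace_mul_comm]; simp only [Matrix.mul_assoc]
    have a4 : (E β * K * (K * E β)).trace = (E β * E β * (K * K)).trace := by
      rw [Matrix.mul_assoc, Matrix.trace_mul_comm, Matrix.mul_assoc, Matrix.mul_assoc,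
        Matrix.trace_mul_comm, Matrix.mul_assoc, Matrix.trace_mul_comm]
      simp only [Matrix.mul_assoc]
    rw [a1, a2, a3, a4]
    ring
  simp only [h1]
  rw [← Finset.mul_sum, Finset.sum_sub_distrib, ← Matrix.trace_sum, ← Matrix.trace_sum,
    ← Finset.sum_mul, ← Finset.sum_mul, aux_EAE hn E hs, aux_EAE hn E hs]
  simp only [Matrix.smul_mul, one_mul, Matrix.trace_smul, Matrix.trace_one, smul_eq_mul,
    Fintype.card_fin]
  ring

theorem aux_rank {n : ℕ} (x : Matrix (Fin n) (Fin n) ℂ) (hrank : x.rank = 1)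
    (A : Matrix (Fin n) (Fin n) ℂ) : x * A * x = (x * A).trace • x := by
  rw [Matrix.rank, finrank_eq_one_iff'] at hrank
  obtain ⟨⟨a, ha⟩, -, h⟩ := hrank
  have h' : ∀ j, ∃ c : ℂ, ∀ i, x i j = a i * c := by
    intro j
    obtain ⟨c, hc⟩ := h ⟨x.mulVecLin (Pi.single j 1), LinearMap.mem_range_self _ _⟩
    refine ⟨c, fun i => ?_⟩
    have := congrFun (congrArg Subtype.val hc) i
    simp at this
    rw [← this, mul_comm]
  choose b hb using h'
  have hx : x = Matrix.vecMulVec a b := by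
    ext i j; simp [Matrix.vecMulVec_apply, hb]
  subst hx
  ext i j
  simp only [Matrix.mul_apply, Matrix.vecMulVec_apply, Matrix.smul_apply, Matrix.trace,
    Matrix.diag, smul_eq_mul, Finset.sum_mul]
  refine Finset.sum_congr rfl fun k _ => ?_
  refine Finset.sum_congr rfl fun l _ => ?_
  ring

theorem aux_LL {n : ℕ} (μ : ℝ) {x p u v : Matrix (Fin n) (Fin n) ℂ}
    (hx : x.IsHermitian) (hp : p.IsHermitian) (hu : u.IsHermitian) (hv : v.IsHermitian) :
    ((LLfun μ x p u v : ℝ) : ℂ) = ((u * v - v * u) *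
      ((1 / (4 * n) : ℂ) • (x * p - p * x)
        - (Complex.I * μ / (2 * (x.trace.re : ℝ))) • x)).trace := by
  unfold LLfun jInner
  have e1 := aux_real ((aux_jp hu (aux_jp hv hx)).sub (aux_jp hv (aux_jp hu hx))) hp
  have e2 := aux_real hx (aux_comm hu hv)
  rw [Matrix.mul_smul, Matrix.trace_smul, smul_eq_mul] at e2
  push_cast
  rw [e1, e2]
  have e3 : jordanProd u (jordanProd v x) - jordanProd v (jordanProd u x)
      = (1 / 4 : ℂ) • ((u * v - v * u) * x - x * (u * v - v * u)) := by
    ext i j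
    simp only [jordanProd, Matrix.mul_smul, Matrix.smul_mul, mul_add, add_mul, mul_sub, sub_mul,
      Matrix.mul_assoc, Matrix.smul_apply, Matrix.add_apply, Matrix.sub_apply, smul_eq_mul]
    ring
  rw [e3]
  generalize u * v - v * u = D
  simp only [mul_sub, sub_mul, Matrix.mul_smul, Matrix.smul_mul, Matrix.trace_sub,
    Matrix.trace_smul, smul_eq_mul]
  rw [Matrix.trace_mul_comm x D, Matrix.mul_assoc x D p, Matrix.trace_mul_comm x (D * p),
    Matrix.mul_assoc D p x, Matrix.mul_assoc D x p]
  field_simp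

theorem quadratic_relation_vii
    (n : ℕ) (hn : 2 ≤ n) (μ : ℝ)
    (x : Matrix (Fin n) (Fin n) ℂ)
    (hherm : x.IsHermitian) (hpsd : x.PosSemidef) (hrank : x.rank = 1)
    (p w : Matrix (Fin n) (Fin n) ℂ) (hw : w.IsHermitian) (hp : p = jordanProd x w)
    (E : Fin (n ^ 2) → Matrix (Fin n) (Fin n) ℂ)
    (hEherm : ∀ α, (E α).IsHermitian)
    (hEorth : ∀ α β, jInner (E α) (E β) = if α = β then 1 else 0)
    (hEspan : ∀ u : Matrix (Fin n) (Fin n) ℂ, u.IsHermitian →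
      u = ∑ α, (jInner (E α) u : ℂ) • E α)
    :
    (4 / (n : ℝ) ^ 3) * (∑ α, ∑ β, (LLfun μ x p (E α) (E β)) ^ 2)
      = Xfun μ x p 1 * Yfun x 1 - (Lfun x p 1) ^ 2 + (((n : ℝ) - 2) / (n : ℝ)) * μ ^ 2 := by
  have hn0 : (n : ℂ) ≠ 0 := by
    have : n ≠ 0 := by omega
    exact_mod_cast this
  have hpH : p.IsHermitian := hp ▸ aux_jp hherm hw
  have hs := aux_span E hEherm hEspan
  have htr : ((x.trace.re : ℝ) : ℂ) = x.trace := by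
    have := aux_real hherm (Matrix.isHermitian_one (n := Fin n) (α := ℂ))
    rwa [mul_one] at this
  have ht0 : x.trace ≠ 0 := by
    intro h
    rw [hpsd.trace_eq_zero_iff] at h
    rw [h, Matrix.rank_zero] at hrank
    exact zero_ne_one hrank
  have hxx : x * x = x.trace • x := by
    have := aux_rank x hrank 1
    rwa [mul_one] at this
  have hxpx := aux_rank x hrank p
  have hppH : (p * p).IsHermitian := by
    unfold Matrix.IsHermitian; rw [Matrix.conjTranspose_mul, hpH.eq]
  have htrip : jTriple p 1 p = p * p := by
    ext i j
    simp only [jTriple, jordanProd, Matrix.mul_smul, Matrix.smul_mul, mul_add, add_mul, mul_one,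
      one_mul, Matrix.smul_apply, Matrix.add_apply, Matrix.sub_apply, smul_eq_mul]
    ring
  have hj1 : jordanProd 1 x = x := by
    ext i j
    simp only [jordanProd, mul_one, one_mul, Matrix.smul_apply, Matrix.add_apply, smul_eq_mul]
    ring
  have hX : ((Xfun μ x p 1 : ℝ) : ℂ) = 1 / n * (x * (p * p)).trace + n * μ ^ 2 / x.trace := by
    unfold Xfun jInner
    rw [htrip]
    simp only [one_mul, mul_one, sub_self, mul_zero, Matrix.trace_zero, Complex.zero_re, zero_div,
      sub_zero]
    push_cast
    rw [aux_real hherm hppH, htr]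
    field_simp
  have hY : ((Yfun x 1 : ℝ) : ℂ) = 1 / n * x.trace := by
    unfold Yfun jInner
    rw [one_mul]
    push_cast
    rw [htr]
  have hL : ((Lfun x p 1 : ℝ) : ℂ) = 1 / n * (x * p).trace := by
    unfold Lfun jInner
    rw [hj1]
    push_cast
    rw [aux_real hherm hpH]
  have hsum := aux_sum hn0 E hs ((1 / (4 * n) : ℂ) • (x * p - p * x)
        - (Complex.I * μ / (2 * (x.trace.re : ℝ))) • x)
  apply Complex.ofReal_injective
  push_cast
  rw [hX, hY, hL]
  simp only [aux_LL μ hherm hpH (hEherm _) (hEherm _)]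
  rw [hsum, htr]
  have b1 : (x * p * (x * p)).trace = (x * p).trace ^ 2 := by
    rw [← Matrix.mul_assoc, hxpx, Matrix.smul_mul, Matrix.trace_smul, smul_eq_mul, sq]
  have b2 : (p * x * (p * x)).trace = (x * p).trace ^ 2 := by
    rw [← b1, Matrix.mul_assoc, Matrix.trace_mul_comm p, ← Matrix.mul_assoc, ← Matrix.mul_assoc]
  have b3 : (x * p * (p * x)).trace = x.trace * (x * (p * p)).trace := by
    rw [← Matrix.mul_assoc, Matrix.trace_mul_comm, Matrix.mul_assoc x p p, ← Matrix.mul_assoc, hxx,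
      Matrix.smul_mul, Matrix.trace_smul, smul_eq_mul]
  have b4 : (p * x * (x * p)).trace = x.trace * (x * (p * p)).trace := by
    rw [Matrix.trace_mul_comm, b3]
  have b5 : (x * p * x).trace = x.trace * (x * p).trace := by
    rw [hxpx, Matrix.trace_smul, smul_eq_mul, mul_comm]
  have b6 : (x * (x * p)).trace = x.trace * (x * p).trace := by
    rw [← b5, Matrix.trace_mul_comm]
  have b7 : (x * (p * x)).trace = x.trace * (x * p).trace := by
    rw [← b5, Matrix.mul_assoc]
  have b8 : (p * x * x).trace = x.trace * (x * p).trace := by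
    rw [← b7, Matrix.trace_mul_comm]
  have b9 : (x * x).trace = x.trace ^ 2 := by
    rw [hxx, Matrix.trace_smul, smul_eq_mul, sq]
  simp only [mul_sub, sub_mul, Matrix.mul_smul, Matrix.smul_mul, Matrix.trace_sub, smul_sub,
    Matrix.trace_smul, smul_eq_mul, b1, b2, b3, b4, b5, b6, b7, b8, b9, Matrix.trace_mul_comm p x]
  have hI := Complex.I_sq
  field_simp
  ring_nf
  simp only [hI]
  ring
end
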